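/- Eta-expansion in strongly focalised DAFoc: for every type A, the unfocused sequent vec(A) ⊢ A is derivable in the strongly focalised calculus DAFoc (in particular vec(P) ⊢ P for every positive-output type P and vec(N) ⊢ N for every negative-output type N). -/

import Mathlib

/-!
Formalisation of the displacement calculus with additives DA, the weakly
focalised calculus DAf (with and without Cut) and the strongly focalised
calculus DAFoc, following Morrill–Valentín.
-/

namespace DA

/-- Bias of atomic types. -/
inductive Bias : Type where
  | pos
  | neg
deriving DecidableEq

/-- Types of the displacement calculus with additives, indexed by their sort. -/
inductive Ty : ℕ → Type where
  | atom (b : Bias) (name : ℕ) (i : ℕ) : Ty i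
  | over {i j : ℕ} : Ty (i + j) → Ty j → Ty i                                   -- C / B
  | under {i j : ℕ} : Ty i → Ty (i + j) → Ty j                                  -- A \ C
  | prod {i j : ℕ} : Ty i → Ty j → Ty (i + j)                                   -- A • B
  | unitI : Ty 0                                                                -- I
  | circ {i j : ℕ} (k : ℕ) (hk : 1 ≤ k ∧ k ≤ i + 1) : Ty (i + j) → Ty j → Ty (i + 1)   -- C ↑ₖ B
  | infx {i j : ℕ} (k : ℕ) (hk : 1 ≤ k ∧ k ≤ i + 1) : Ty (i + 1) → Ty (i + j) → Ty j   -- A ↓ₖ C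
  | wprod {i j : ℕ} (k : ℕ) (hk : 1 ≤ k ∧ k ≤ i + 1) : Ty (i + 1) → Ty j → Ty (i + j)  -- A ⊙ₖ B
  | unitJ : Ty 1                                                                -- J
  | amp {i : ℕ} : Ty i → Ty i → Ty i                                            -- A & B
  | oplus {i : ℕ} : Ty i → Ty i → Ty i                                          -- A ⊕ B

/-- `posb A = true` iff `A` is synchronous as an output (positive output /
asynchronous as an input): positive atoms and `•`, `I`, `⊙ₖ`, `J`, `⊕`.
Otherwise `A` is synchronous as an input (negative atoms and `/`, `\`, `↑ₖ`,
`↓ₖ`, `&`). -/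
def posb {i : ℕ} : Ty i → Bool
  | .atom .pos _ _ => true
  | .atom .neg _ _ => false
  | .over _ _ => false
  | .under _ _ => false
  | .prod _ _ => true
  | .unitI => true
  | .circ _ _ _ _ => false
  | .infx _ _ _ _ => false
  | .wprod _ _ _ _ => true
  | .unitJ => true
  | .amp _ _ => false
  | .oplus _ _ => true

def isAtom {i : ℕ} : Ty i → Bool
  | .atom _ _ _ => true
  | _ => false

/-- Elements of configurations: the separator `1`, types of sort 0, and
figures `A{Δ₁ : … : Δ_{sA}}` of types of sort `> 0`; together with *boxed*
(focalised) variants of the latter two, used by the focalised calculi. -/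
inductive BTree : Type where
  | sep : BTree
  | type0 : Ty 0 → BTree
  | btype0 : Ty 0 → BTree
  | fig {i : ℕ} : Ty (i + 1) → (Fin (i + 1) → List BTree) → BTree
  | bfig {i : ℕ} : Ty (i + 1) → (Fin (i + 1) → List BTree) → BTree

/-- Configurations (possibly containing boxed, i.e. focalised, occurrences). -/
abbrev BConfig := List BTree

/-- The figure `vec(A)` of a type `A`. -/
def vecT {i : ℕ} (A : Ty i) : BTree :=
  match i, A with
  | 0, A => .type0 A
  | _ + 1, A => .fig A (fun _ => [BTree.sep])

def vec {i : ℕ} (A : Ty i) : BConfig := [vecT A]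

/-- The boxed (focalised) figure `[vec(A)]` of a type `A`. -/
def bvecT {i : ℕ} (A : Ty i) : BTree :=
  match i, A with
  | 0, A => .btype0 A
  | _ + 1, A => .bfig A (fun _ => [BTree.sep])

def bvec {i : ℕ} (A : Ty i) : BConfig := [bvecT A]

/-- The premise occurrence of an active antecedent subformula in a synchronous
rule: focalised (boxed) if it is synchronous in the antecedent (negative),
unfocalised if asynchronous (positive). -/
def fvec {i : ℕ} (A : Ty i) : BConfig := if posb A then vec A else bvec A

/-! Sort of a tree / configuration: its number of separators. -/
mutual
  inductive TreeSort : BTree → ℕ → Prop where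
    | sep : TreeSort .sep 1
    | type0 (A : Ty 0) : TreeSort (.type0 A) 0
    | btype0 (A : Ty 0) : TreeSort (.btype0 A) 0
    | fig {i : ℕ} (A : Ty (i + 1)) (args : Fin (i + 1) → BConfig) (ns : Fin (i + 1) → ℕ) :
        (∀ k, ConfigSort (args k) (ns k)) → TreeSort (.fig A args) (Finset.univ.sum ns)
    | bfig {i : ℕ} (A : Ty (i + 1)) (args : Fin (i + 1) → BConfig) (ns : Fin (i + 1) → ℕ) :
        (∀ k, ConfigSort (args k) (ns k)) → TreeSort (.bfig A args) (Finset.univ.sum ns)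
  inductive ConfigSort : BConfig → ℕ → Prop where
    | nil : ConfigSort [] 0
    | cons {t : BTree} {ts : BConfig} {n m : ℕ} :
        TreeSort t n → ConfigSort ts m → ConfigSort (t :: ts) (n + m)
end

/-! Number of boxed (focalised) formula occurrences in a tree / configuration. -/
mutual
  inductive TBoxes : BTree → ℕ → Prop where
    | sep : TBoxes .sep 0
    | type0 (A : Ty 0) : TBoxes (.type0 A) 0
    | btype0 (A : Ty 0) : TBoxes (.btype0 A) 1
    | fig {i : ℕ} (A : Ty (i + 1)) (args : Fin (i + 1) → BConfig) (ns : Fin (i + 1) → ℕ) :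
        (∀ k, CBoxes (args k) (ns k)) → TBoxes (.fig A args) (Finset.univ.sum ns)
    | bfig {i : ℕ} (A : Ty (i + 1)) (args : Fin (i + 1) → BConfig) (ns : Fin (i + 1) → ℕ) :
        (∀ k, CBoxes (args k) (ns k)) → TBoxes (.bfig A args) (Finset.univ.sum ns + 1)
  inductive CBoxes : BConfig → ℕ → Prop where
    | nil : CBoxes [] 0
    | cons {t : BTree} {ts : BConfig} {n m : ℕ} :
        TBoxes t n → CBoxes ts m → CBoxes (t :: ts) (n + m)
end

/-! The fold `Γ ⊗ ⟨Δ₁ : … : Δ_i⟩`: `FoldC Γ [Δ₁,…,Δ_i] res` holds iff `res` is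
the result of replacing the successive separators of `Γ` by `Δ₁,…,Δ_i`. -/
mutual
  inductive FoldT : BTree → List BConfig → BConfig → Prop where
    | sep (Δ : BConfig) : FoldT .sep [Δ] Δ
    | type0 (A : Ty 0) : FoldT (.type0 A) [] [.type0 A]
    | btype0 (A : Ty 0) : FoldT (.btype0 A) [] [.btype0 A]
    | fig {i : ℕ} (A : Ty (i + 1)) (args args' : Fin (i + 1) → BConfig)
        (reps : Fin (i + 1) → List BConfig) :
        (∀ k, FoldC (args k) (reps k) (args' k)) →
        FoldT (.fig A args) (List.ofFn reps).flatten [.fig A args']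
    | bfig {i : ℕ} (A : Ty (i + 1)) (args args' : Fin (i + 1) → BConfig)
        (reps : Fin (i + 1) → List BConfig) :
        (∀ k, FoldC (args k) (reps k) (args' k)) →
        FoldT (.bfig A args) (List.ofFn reps).flatten [.bfig A args']
  inductive FoldC : BConfig → List BConfig → BConfig → Prop where
    | nil : FoldC [] [] []
    | cons {t : BTree} {ts : BConfig} {r1 r2 : List BConfig} {c1 c2 : BConfig} :
        FoldT t r1 c1 → FoldC ts r2 c2 → FoldC (t :: ts) (r1 ++ r2) (c1 ++ c2)
end

/-- The `k`-th metalinguistic wrap `Δ |ₖ Γ`: `Wrap Δ k Γ res` holds iff `res`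
is the result of replacing the `k`-th separator of `Δ` by `Γ`. -/
def Wrap (Δ : BConfig) (k : ℕ) (Γ res : BConfig) : Prop :=
  ∃ n : ℕ, ConfigSort Δ n ∧
    FoldC Δ ((List.replicate n ([BTree.sep] : BConfig)).set (k - 1) Γ) res

/-! One-hole contexts `Δ₀(—)` for configurations: the hole is a configuration
position, either at the top level or nested inside a figure argument. -/
mutual
  inductive THole : Type where
    | fig {i : ℕ} (A : Ty (i + 1)) (args : Fin (i + 1) → BConfig) (k : Fin (i + 1))
        (c : CHole) : THole
    | bfig {i : ℕ} (A : Ty (i + 1)) (args : Fin (i + 1) → BConfig) (k : Fin (i + 1))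
        (c : CHole) : THole
  inductive CHole : Type where
    | top (pre post : BConfig) : CHole
    | deep (pre : BConfig) (t : THole) (post : BConfig) : CHole
end

/-! Plugging a configuration into a one-hole context. -/
mutual
  inductive PlugT : THole → BConfig → BTree → Prop where
    | fig {i : ℕ} (A : Ty (i + 1)) (args : Fin (i + 1) → BConfig) (k : Fin (i + 1))
        (c : CHole) (Γ plugged : BConfig) :
        PlugC c Γ plugged → PlugT (.fig A args k c) Γ (.fig A (Function.update args k plugged))
    | bfig {i : ℕ} (A : Ty (i + 1)) (args : Fin (i + 1) → BConfig) (k : Fin (i + 1))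
        (c : CHole) (Γ plugged : BConfig) :
        PlugC c Γ plugged → PlugT (.bfig A args k c) Γ (.bfig A (Function.update args k plugged))
  inductive PlugC : CHole → BConfig → BConfig → Prop where
    | top (pre post Γ : BConfig) : PlugC (.top pre post) Γ (pre ++ Γ ++ post)
    | deep (pre post Γ : BConfig) (t : THole) (tr : BTree) :
        PlugT t Γ tr → PlugC (.deep pre t post) Γ (pre ++ tr :: post)
end

/-- The data `Δ⟨—⟩ = Δ₀(— ⊗ ⟨Δ₁ : … : Δ_i⟩)` of a context in the generalised
sense of the displacement calculus. -/
structure Zone : Type where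
  hole : CHole
  reps : List BConfig

/-- `Sub Z Γ res` holds iff `res = Δ⟨Γ⟩` for the context `Δ⟨—⟩` given by `Z`,
i.e. `res = Δ₀(Γ ⊗ ⟨Δ₁ : … : Δ_i⟩)`. -/
def Sub (Z : Zone) (Γ res : BConfig) : Prop :=
  ∃ folded : BConfig, FoldC Γ Z.reps folded ∧ PlugC Z.hole folded res

/-- The displacement calculus with additives DA: `DADeriv Δ i A` is
derivability of the sequent `Δ ⇒ A` (identity axiom restricted to atoms). -/
inductive DADeriv : BConfig → ∀ i : ℕ, Ty i → Prop where
  | id (b : Bias) (name i : ℕ) :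
      DADeriv (vec (.atom b name i)) i (.atom b name i)
  | overR {i j : ℕ} {Γ : BConfig} {C : Ty (i + j)} {B : Ty j} :
      DADeriv (Γ ++ vec B) (i + j) C → DADeriv Γ i (.over C B)
  | overL {i j d : ℕ} {Γ s1 s2 : BConfig} {B : Ty j} {C : Ty (i + j)} {Z : Zone} {D : Ty d} :
      DADeriv Γ j B → Sub Z (vec C) s1 → DADeriv s1 d D →
      Sub Z (vec (.over C B) ++ Γ) s2 → DADeriv s2 d D
  | underR {i j : ℕ} {Γ : BConfig} {A : Ty i} {C : Ty (i + j)} :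
      DADeriv (vec A ++ Γ) (i + j) C → DADeriv Γ j (.under A C)
  | underL {i j d : ℕ} {Γ s1 s2 : BConfig} {A : Ty i} {C : Ty (i + j)} {Z : Zone} {D : Ty d} :
      DADeriv Γ i A → Sub Z (vec C) s1 → DADeriv s1 d D →
      Sub Z (Γ ++ vec (.under A C)) s2 → DADeriv s2 d D
  | prodR {i j : ℕ} {Γ1 Γ2 : BConfig} {A : Ty i} {B : Ty j} :
      DADeriv Γ1 i A → DADeriv Γ2 j B → DADeriv (Γ1 ++ Γ2) (i + j) (.prod A B)
  | prodL {i j d : ℕ} {s1 s2 : BConfig} {A : Ty i} {B : Ty j} {Z : Zone} {D : Ty d} :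
      Sub Z (vec A ++ vec B) s1 → DADeriv s1 d D →
      Sub Z (vec (.prod A B)) s2 → DADeriv s2 d D
  | unitIR : DADeriv [] 0 .unitI
  | unitIL {d : ℕ} {s1 s2 : BConfig} {Z : Zone} {D : Ty d} :
      Sub Z [] s1 → DADeriv s1 d D → Sub Z (vec .unitI) s2 → DADeriv s2 d D
  | circR {i j : ℕ} (k : ℕ) (hk : 1 ≤ k ∧ k ≤ i + 1) {Γ w : BConfig}
      {C : Ty (i + j)} {B : Ty j} :
      Wrap Γ k (vec B) w → DADeriv w (i + j) C → DADeriv Γ (i + 1) (.circ k hk C B)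
  | circL {i j d : ℕ} (k : ℕ) (hk : 1 ≤ k ∧ k ≤ i + 1) {Γ w s1 s2 : BConfig}
      {C : Ty (i + j)} {B : Ty j} {Z : Zone} {D : Ty d} :
      DADeriv Γ j B → Sub Z (vec C) s1 → DADeriv s1 d D →
      Wrap (vec (Ty.circ k hk C B)) k Γ w → Sub Z w s2 → DADeriv s2 d D
  | infxR {i j : ℕ} (k : ℕ) (hk : 1 ≤ k ∧ k ≤ i + 1) {Γ w : BConfig}
      {A : Ty (i + 1)} {C : Ty (i + j)} :
      Wrap (vec A) k Γ w → DADeriv w (i + j) C → DADeriv Γ j (.infx k hk A C)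
  | infxL {i j d : ℕ} (k : ℕ) (hk : 1 ≤ k ∧ k ≤ i + 1) {Γ w s1 s2 : BConfig}
      {A : Ty (i + 1)} {C : Ty (i + j)} {Z : Zone} {D : Ty d} :
      DADeriv Γ (i + 1) A → Sub Z (vec C) s1 → DADeriv s1 d D →
      Wrap Γ k (vec (Ty.infx k hk A C)) w → Sub Z w s2 → DADeriv s2 d D
  | wprodR {i j : ℕ} (k : ℕ) (hk : 1 ≤ k ∧ k ≤ i + 1) {Γ1 Γ2 w : BConfig}
      {A : Ty (i + 1)} {B : Ty j} :
      DADeriv Γ1 (i + 1) A → DADeriv Γ2 j B → Wrap Γ1 k Γ2 w →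
      DADeriv w (i + j) (.wprod k hk A B)
  | wprodL {i j d : ℕ} (k : ℕ) (hk : 1 ≤ k ∧ k ≤ i + 1) {w s1 s2 : BConfig}
      {A : Ty (i + 1)} {B : Ty j} {Z : Zone} {D : Ty d} :
      Wrap (vec A) k (vec B) w → Sub Z w s1 → DADeriv s1 d D →
      Sub Z (vec (.wprod k hk A B)) s2 → DADeriv s2 d D
  | unitJR : DADeriv [BTree.sep] 1 .unitJ
  | unitJL {d : ℕ} {s1 s2 : BConfig} {Z : Zone} {D : Ty d} :
      Sub Z [BTree.sep] s1 → DADeriv s1 d D → Sub Z (vec .unitJ) s2 → DADeriv s2 d D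
  | ampR {i : ℕ} {Γ : BConfig} {A B : Ty i} :
      DADeriv Γ i A → DADeriv Γ i B → DADeriv Γ i (.amp A B)
  | ampL1 {i d : ℕ} {s1 s2 : BConfig} {A B : Ty i} {Z : Zone} {D : Ty d} :
      Sub Z (vec A) s1 → DADeriv s1 d D → Sub Z (vec (.amp A B)) s2 → DADeriv s2 d D
  | ampL2 {i d : ℕ} {s1 s2 : BConfig} {A B : Ty i} {Z : Zone} {D : Ty d} :
      Sub Z (vec B) s1 → DADeriv s1 d D → Sub Z (vec (.amp A B)) s2 → DADeriv s2 d D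
  | oplusR1 {i : ℕ} {Γ : BConfig} {A B : Ty i} :
      DADeriv Γ i A → DADeriv Γ i (.oplus A B)
  | oplusR2 {i : ℕ} {Γ : BConfig} {A B : Ty i} :
      DADeriv Γ i B → DADeriv Γ i (.oplus A B)
  | oplusL {i d : ℕ} {s1 s2 s3 : BConfig} {A B : Ty i} {Z : Zone} {D : Ty d} :
      Sub Z (vec A) s1 → DADeriv s1 d D → Sub Z (vec B) s2 → DADeriv s2 d D →
      Sub Z (vec (.oplus A B)) s3 → DADeriv s3 d D

/-! Occurrence of a type satisfying `φ` somewhere in a configuration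
(as the head type of a tree/figure, possibly nested). -/
mutual
  inductive TOcc (φ : ∀ j : ℕ, Ty j → Prop) : BTree → Prop where
    | type0 {A : Ty 0} : φ 0 A → TOcc φ (.type0 A)
    | btype0 {A : Ty 0} : φ 0 A → TOcc φ (.btype0 A)
    | figHead {i : ℕ} {A : Ty (i + 1)} {args : Fin (i + 1) → BConfig} :
        φ (i + 1) A → TOcc φ (.fig A args)
    | bfigHead {i : ℕ} {A : Ty (i + 1)} {args : Fin (i + 1) → BConfig} :
        φ (i + 1) A → TOcc φ (.bfig A args)
    | figArg {i : ℕ} {A : Ty (i + 1)} {args : Fin (i + 1) → BConfig} (k : Fin (i + 1)) :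
        COcc φ (args k) → TOcc φ (.fig A args)
    | bfigArg {i : ℕ} {A : Ty (i + 1)} {args : Fin (i + 1) → BConfig} (k : Fin (i + 1)) :
        COcc φ (args k) → TOcc φ (.bfig A args)
  inductive COcc (φ : ∀ j : ℕ, Ty j → Prop) : BConfig → Prop where
    | head {t : BTree} {ts : BConfig} : TOcc φ t → COcc φ (t :: ts)
    | tail {t : BTree} {ts : BConfig} : COcc φ ts → COcc φ (t :: ts)
end

/-- The sequent `Δ ⊢ A` contains a complex (non-atomic) asynchronous formula
occurrence: a non-atomic positive type in the antecedent, or a non-atomic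
negative succedent. -/
def HasComplexAsync (Δ : BConfig) (i : ℕ) (A : Ty i) : Prop :=
  COcc (fun _ B => posb B = true ∧ isAtom B = false) Δ ∨
    (posb A = false ∧ isAtom A = false)

/-- A sequent (antecedent plus succedent-focus flag) contains at most one
focalised formula. -/
def AtMostOne (Δ : BConfig) (f : Bool) : Prop :=
  if f then CBoxes Δ 0 else (CBoxes Δ 0 ∨ CBoxes Δ 1)

/-- A sequent contains exactly one focalised formula. -/
def ExactlyOne (Δ : BConfig) (f : Bool) : Prop :=
  if f then CBoxes Δ 0 else CBoxes Δ 1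

/-- Side condition of the strongly focalised calculus: a sequent containing a
focalised formula contains no complex asynchronous formula occurrence (and
vice versa). -/
def Ok (strong : Bool) (Δ : BConfig) (f : Bool) (i : ℕ) (A : Ty i) : Prop :=
  strong = true → ¬ ((f = true ∨ ¬ CBoxes Δ 0) ∧ HasComplexAsync Δ i A)

/-- Focalised sequent calculus: `DW cuts strong Δ f i A` is derivability of
the sequent `Δ ⊢ A`, whose succedent is focalised iff `f = true` and whose
focalised antecedent formulas are the boxed occurrences of `Δ`.
`cuts = true` allows the Cut rules (weakly focalised calculus DAf);
`cuts = false` is Cut-free DAf; `strong = true` additionally imposes the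
strong focalisation discipline (DAFoc, taken with `cuts = false`). -/
inductive DW (cuts strong : Bool) : BConfig → Bool → ∀ i : ℕ, Ty i → Prop where
  -- identity axioms, restricted to atoms
  | idP (name i : ℕ) :
      DW cuts strong (vec (.atom .pos name i)) true i (.atom .pos name i)
  | idQ (name i : ℕ) :
      DW cuts strong (bvec (.atom .neg name i)) false i (.atom .neg name i)
  -- focusing rules
  | focR {i : ℕ} {Δ : BConfig} {P : Ty i} :
      posb P = true →
      DW cuts strong Δ true i P →
      AtMostOne Δ false → Ok strong Δ false i P →
      DW cuts strong Δ false i P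
  | focL {j d : ℕ} {Q : Ty j} {D : Ty d} {Z : Zone} {s1 s2 : BConfig} :
      posb Q = false →
      Sub Z (bvec Q) s1 → DW cuts strong s1 false d D →
      Sub Z (vec Q) s2 → AtMostOne s2 false → Ok strong s2 false d D →
      DW cuts strong s2 false d D
  -- asynchronous right rules
  | overR {i j : ℕ} {Γ : BConfig} {C : Ty (i + j)} {B : Ty j} :
      DW cuts strong (Γ ++ vec B) false (i + j) C →
      AtMostOne Γ false → Ok strong Γ false i (.over C B) →
      DW cuts strong Γ false i (.over C B)
  | underR {i j : ℕ} {Γ : BConfig} {A : Ty i} {C : Ty (i + j)} :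
      DW cuts strong (vec A ++ Γ) false (i + j) C →
      AtMostOne Γ false → Ok strong Γ false j (.under A C) →
      DW cuts strong Γ false j (.under A C)
  | circR {i j : ℕ} (k : ℕ) (hk : 1 ≤ k ∧ k ≤ i + 1) {Γ w : BConfig}
      {C : Ty (i + j)} {B : Ty j} :
      Wrap Γ k (vec B) w → DW cuts strong w false (i + j) C →
      AtMostOne Γ false → Ok strong Γ false (i + 1) (.circ k hk C B) →
      DW cuts strong Γ false (i + 1) (.circ k hk C B)
  | infxR {i j : ℕ} (k : ℕ) (hk : 1 ≤ k ∧ k ≤ i + 1) {Γ w : BConfig}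
      {A : Ty (i + 1)} {C : Ty (i + j)} :
      Wrap (vec A) k Γ w → DW cuts strong w false (i + j) C →
      AtMostOne Γ false → Ok strong Γ false j (.infx k hk A C) →
      DW cuts strong Γ false j (.infx k hk A C)
  | ampR {i : ℕ} {Γ : BConfig} {A B : Ty i} :
      DW cuts strong Γ false i A → DW cuts strong Γ false i B →
      AtMostOne Γ false → Ok strong Γ false i (.amp A B) →
      DW cuts strong Γ false i (.amp A B)
  -- asynchronous left rules
  | prodL {i j d : ℕ} {f : Bool} {s1 s2 : BConfig} {A : Ty i} {B : Ty j}
      {Z : Zone} {D : Ty d} :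
      Sub Z (vec A ++ vec B) s1 → DW cuts strong s1 f d D →
      Sub Z (vec (.prod A B)) s2 → AtMostOne s2 f → Ok strong s2 f d D →
      DW cuts strong s2 f d D
  | unitIL {d : ℕ} {f : Bool} {s1 s2 : BConfig} {Z : Zone} {D : Ty d} :
      Sub Z [] s1 → DW cuts strong s1 f d D →
      Sub Z (vec .unitI) s2 → AtMostOne s2 f → Ok strong s2 f d D →
      DW cuts strong s2 f d D
  | wprodL {i j d : ℕ} (k : ℕ) (hk : 1 ≤ k ∧ k ≤ i + 1) {f : Bool}
      {w s1 s2 : BConfig} {A : Ty (i + 1)} {B : Ty j} {Z : Zone} {D : Ty d} :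
      Wrap (vec A) k (vec B) w → Sub Z w s1 → DW cuts strong s1 f d D →
      Sub Z (vec (.wprod k hk A B)) s2 → AtMostOne s2 f → Ok strong s2 f d D →
      DW cuts strong s2 f d D
  | unitJL {d : ℕ} {f : Bool} {s1 s2 : BConfig} {Z : Zone} {D : Ty d} :
      Sub Z [BTree.sep] s1 → DW cuts strong s1 f d D →
      Sub Z (vec .unitJ) s2 → AtMostOne s2 f → Ok strong s2 f d D →
      DW cuts strong s2 f d D
  | oplusL {i d : ℕ} {f : Bool} {s1 s2 s3 : BConfig} {A B : Ty i} {Z : Zone} {D : Ty d} :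
      Sub Z (vec A) s1 → DW cuts strong s1 f d D →
      Sub Z (vec B) s2 → DW cuts strong s2 f d D →
      Sub Z (vec (.oplus A B)) s3 → AtMostOne s3 f → Ok strong s3 f d D →
      DW cuts strong s3 f d D
  -- synchronous left rules (active formula focalised)
  | overL {i j d : ℕ} {Γ s1 s2 : BConfig} {B : Ty j} {C : Ty (i + j)} {Z : Zone} {D : Ty d} :
      DW cuts strong Γ (posb B) j B →
      Sub Z (fvec C) s1 → DW cuts strong s1 false d D →
      Sub Z (bvec (.over C B) ++ Γ) s2 → AtMostOne s2 false → Ok strong s2 false d D →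
      DW cuts strong s2 false d D
  | underL {i j d : ℕ} {Γ s1 s2 : BConfig} {A : Ty i} {C : Ty (i + j)} {Z : Zone} {D : Ty d} :
      DW cuts strong Γ (posb A) i A →
      Sub Z (fvec C) s1 → DW cuts strong s1 false d D →
      Sub Z (Γ ++ bvec (.under A C)) s2 → AtMostOne s2 false → Ok strong s2 false d D →
      DW cuts strong s2 false d D
  | circL {i j d : ℕ} (k : ℕ) (hk : 1 ≤ k ∧ k ≤ i + 1) {Γ w s1 s2 : BConfig}
      {C : Ty (i + j)} {B : Ty j} {Z : Zone} {D : Ty d} :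
      DW cuts strong Γ (posb B) j B →
      Sub Z (fvec C) s1 → DW cuts strong s1 false d D →
      Wrap (bvec (Ty.circ k hk C B)) k Γ w → Sub Z w s2 →
      AtMostOne s2 false → Ok strong s2 false d D →
      DW cuts strong s2 false d D
  | infxL {i j d : ℕ} (k : ℕ) (hk : 1 ≤ k ∧ k ≤ i + 1) {Γ w s1 s2 : BConfig}
      {A : Ty (i + 1)} {C : Ty (i + j)} {Z : Zone} {D : Ty d} :
      DW cuts strong Γ (posb A) (i + 1) A →
      Sub Z (fvec C) s1 → DW cuts strong s1 false d D →
      Wrap Γ k (bvec (Ty.infx k hk A C)) w → Sub Z w s2 →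
      AtMostOne s2 false → Ok strong s2 false d D →
      DW cuts strong s2 false d D
  | ampL1 {i d : ℕ} {s1 s2 : BConfig} {A B : Ty i} {Z : Zone} {D : Ty d} :
      Sub Z (fvec A) s1 → DW cuts strong s1 false d D →
      Sub Z (bvec (.amp A B)) s2 → AtMostOne s2 false → Ok strong s2 false d D →
      DW cuts strong s2 false d D
  | ampL2 {i d : ℕ} {s1 s2 : BConfig} {A B : Ty i} {Z : Zone} {D : Ty d} :
      Sub Z (fvec B) s1 → DW cuts strong s1 false d D →
      Sub Z (bvec (.amp A B)) s2 → AtMostOne s2 false → Ok strong s2 false d D →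
      DW cuts strong s2 false d D
  -- synchronous right rules (succedent focalised)
  | prodR {i j : ℕ} {Γ1 Γ2 : BConfig} {A : Ty i} {B : Ty j} :
      DW cuts strong Γ1 (posb A) i A → DW cuts strong Γ2 (posb B) j B →
      AtMostOne (Γ1 ++ Γ2) true → Ok strong (Γ1 ++ Γ2) true (i + j) (.prod A B) →
      DW cuts strong (Γ1 ++ Γ2) true (i + j) (.prod A B)
  | unitIR : DW cuts strong [] true 0 .unitI
  | wprodR {i j : ℕ} (k : ℕ) (hk : 1 ≤ k ∧ k ≤ i + 1) {Γ1 Γ2 w : BConfig}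
      {A : Ty (i + 1)} {B : Ty j} :
      DW cuts strong Γ1 (posb A) (i + 1) A → DW cuts strong Γ2 (posb B) j B →
      Wrap Γ1 k Γ2 w →
      AtMostOne w true → Ok strong w true (i + j) (.wprod k hk A B) →
      DW cuts strong w true (i + j) (.wprod k hk A B)
  | unitJR : DW cuts strong [BTree.sep] true 1 .unitJ
  | oplusR1 {i : ℕ} {Γ : BConfig} {A B : Ty i} :
      DW cuts strong Γ (posb A) i A →
      AtMostOne Γ true → Ok strong Γ true i (.oplus A B) →
      DW cuts strong Γ true i (.oplus A B)
  | oplusR2 {i : ℕ} {Γ : BConfig} {A B : Ty i} :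
      DW cuts strong Γ (posb B) i B →
      AtMostOne Γ true → Ok strong Γ true i (.oplus A B) →
      DW cuts strong Γ true i (.oplus A B)
  -- Cut rules (weakly focalised calculus only)
  | pcut1 {j d : ℕ} {f : Bool} {Γ s1 s2 : BConfig} {P : Ty j} {Z : Zone} {C : Ty d} :
      cuts = true → posb P = true →
      DW cuts strong Γ true j P →
      Sub Z (vec P) s1 → DW cuts strong s1 f d C →
      Sub Z Γ s2 → AtMostOne s2 f →
      DW cuts strong s2 f d C
  | pcut2 {j d : ℕ} {Γ s1 s2 : BConfig} {N : Ty j} {Z : Zone} {C : Ty d} :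
      cuts = true → posb N = false →
      DW cuts strong Γ false j N →
      Sub Z (bvec N) s1 → DW cuts strong s1 false d C →
      Sub Z Γ s2 → AtMostOne s2 false →
      DW cuts strong s2 false d C
  | ncut1 {j d : ℕ} {Γ s1 s2 : BConfig} {P : Ty j} {Z : Zone} {C : Ty d} :
      cuts = true → posb P = true →
      DW cuts strong Γ false j P →
      Sub Z (vec P) s1 → CBoxes s1 0 → DW cuts strong s1 false d C →
      Sub Z Γ s2 → AtMostOne s2 false →
      DW cuts strong s2 false d C
  | ncut2 {j d : ℕ} {f : Bool} {Γ s1 s2 : BConfig} {N : Ty j} {Z : Zone} {C : Ty d} :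
      cuts = true → posb N = false →
      CBoxes Γ 0 → DW cuts strong Γ false j N →
      Sub Z (vec N) s1 → DW cuts strong s1 f d C →
      Sub Z Γ s2 → AtMostOne s2 f →
      DW cuts strong s2 f d C

/-- The weakly focalised calculus DAf. -/
abbrev DAf (Δ : BConfig) (f : Bool) (i : ℕ) (A : Ty i) : Prop := DW true false Δ f i A

/-- Cut-free DAf. -/
abbrev DAfCutFree (Δ : BConfig) (f : Bool) (i : ℕ) (A : Ty i) : Prop := DW false false Δ f i A

/-- The strongly focalised calculus DAFoc. -/
abbrev DAFoc (Δ : BConfig) (f : Bool) (i : ℕ) (A : Ty i) : Prop := DW false true Δ f i A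

/-- Transport of a type along an equality of sorts. -/
def tcast {i j : ℕ} (h : i = j) (A : Ty i) : Ty j := h ▸ A

end DA

namespace DA


/-! ### Measures, fold and plug as functions -/

/-- Joint induction principle for trees and configurations. -/
theorem treeConf_ind {P : BTree → Prop} {Q : BConfig → Prop}
    (hsep : P .sep) (h0 : ∀ A, P (.type0 A)) (hb0 : ∀ A, P (.btype0 A))
    (hf : ∀ {i : ℕ} (A : Ty (i + 1)) (args : Fin (i + 1) → BConfig),
      (∀ k, Q (args k)) → P (.fig A args))
    (hbf : ∀ {i : ℕ} (A : Ty (i + 1)) (args : Fin (i + 1) → BConfig),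
      (∀ k, Q (args k)) → P (.bfig A args))
    (hnil : Q []) (hcons : ∀ t ts, P t → Q ts → Q (t :: ts)) :
    (∀ t, P t) ∧ (∀ c, Q c) := by
  have hP : ∀ t, P t := fun t =>
    BTree.rec (motive_1 := P) (motive_2 := Q) hsep h0 hb0 (fun A args ih => hf A args ih)
      (fun A args ih => hbf A args ih) hnil (fun t ts h1 h2 => hcons t ts h1 h2) t
  refine ⟨hP, fun c => ?_⟩
  induction c with
  | nil => exact hnil
  | cons t ts ih => exact hcons t ts (hP t) ih

/-- Weights of formula occurrences; the Boolean says whether it is boxed. -/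
abbrev Wt := Bool → ∀ i : ℕ, Ty i → ℕ

mutual
/-- Measure of a tree: separators weigh `a`, formula occurrences weigh `w`. -/
def msT (a : ℕ) (w : Wt) : BTree → ℕ
  | .sep => a
  | .type0 A => w false 0 A
  | .btype0 A => w true 0 A
  | .fig (i := i) A args => w false (i + 1) A + ∑ k, msC a w (args k)
  | .bfig (i := i) A args => w true (i + 1) A + ∑ k, msC a w (args k)
/-- Measure of a configuration. -/
def msC (a : ℕ) (w : Wt) : List BTree → ℕ
  | [] => 0
  | t :: ts => msT a w t + msC a w ts
end

abbrev w0 : Wt := fun _ _ _ => 0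
abbrev wbox : Wt := fun b _ _ => if b then 1 else 0
abbrev wcpx : Wt := fun _ _ A => if posb A = true ∧ isAtom A = false then 1 else 0

abbrev srt (Γ : BConfig) : ℕ := msC 1 w0 Γ
abbrev srtT (t : BTree) : ℕ := msT 1 w0 t

/-- Offset of the `k`-th block. -/
def off {m : ℕ} (s : Fin m → ℕ) (k : Fin m) : ℕ := ∑ l : Fin k.val, s (Fin.castLE k.2.le l)

mutual
/-- Replace the `n`-th separator by `ρ n`. -/
def foT : BTree → (ℕ → BConfig) → BConfig
  | .sep, ρ => ρ 0
  | .type0 A, _ => [.type0 A]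
  | .btype0 A, _ => [.btype0 A]
  | .fig A args, ρ =>
      [.fig A (fun k => foC (args k) (fun n => ρ (off (fun l => srt (args l)) k + n)))]
  | .bfig A args, ρ =>
      [.bfig A (fun k => foC (args k) (fun n => ρ (off (fun l => srt (args l)) k + n)))]
/-- Replace the `n`-th separator by `ρ n`. -/
def foC : List BTree → (ℕ → BConfig) → BConfig
  | [], _ => []
  | t :: ts, ρ => foT t ρ ++ foC ts (fun n => ρ (srtT t + n))
end

mutual
/-- Plugging as a function. -/
def plT : THole → BConfig → BTree
  | .fig A args k c, Γ => .fig A (Function.update args k (plC c Γ))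
  | .bfig A args k c, Γ => .bfig A (Function.update args k (plC c Γ))
/-- Plugging as a function. -/
def plC : CHole → BConfig → BConfig
  | .top pre post, Γ => pre ++ Γ ++ post
  | .deep pre t post, Γ => pre ++ plT t Γ :: post
end

mutual
theorem plT_spec : ∀ (h : THole) (Γ : BConfig), PlugT h Γ (plT h Γ)
  | .fig A args k c, Γ => by rw [plT]; exact .fig A args k c Γ _ (plC_spec c Γ)
  | .bfig A args k c, Γ => by rw [plT]; exact .bfig A args k c Γ _ (plC_spec c Γ)
theorem plC_spec : ∀ (h : CHole) (Γ : BConfig), PlugC h Γ (plC h Γ)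
  | .top pre post, Γ => by rw [plC]; exact .top pre post Γ
  | .deep pre t post, Γ => by rw [plC]; exact .deep pre post Γ t _ (plT_spec t Γ)
end

mutual
theorem plT_comp : ∀ (h : THole) (g : CHole), ∃ h' : THole, ∀ Γ, plT h' Γ = plT h (plC g Γ)
  | .fig A args k c, g => by
      obtain ⟨c', hc⟩ := plC_comp c g
      exact ⟨.fig A args k c', fun Γ => by simp only [plT, hc]⟩
  | .bfig A args k c, g => by
      obtain ⟨c', hc⟩ := plC_comp c g
      exact ⟨.bfig A args k c', fun Γ => by simp only [plT, hc]⟩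
theorem plC_comp : ∀ (h : CHole) (g : CHole), ∃ h' : CHole, ∀ Γ, plC h' Γ = plC h (plC g Γ)
  | .top pre post, .top pre' post' =>
      ⟨.top (pre ++ pre') (post' ++ post), fun Γ => by simp [plC]⟩
  | .top pre post, .deep pre' t post' =>
      ⟨.deep (pre ++ pre') t (post' ++ post), fun Γ => by simp [plC]⟩
  | .deep pre t post, g => by
      obtain ⟨t', ht⟩ := plT_comp t g
      exact ⟨.deep pre t' post, fun Γ => by simp only [plC, ht]⟩
end

theorem msC_append (a : ℕ) (w : Wt) (X Y : BConfig) :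
    msC a w (X ++ Y) = msC a w X + msC a w Y := by
  induction X with
  | nil => simp [msC]
  | cons t ts ih => simp [msC, ih, add_assoc]

theorem foC_append (X Y : BConfig) (ρ : ℕ → BConfig) :
    foC (X ++ Y) ρ = foC X ρ ++ foC Y (fun n => ρ (srt X + n)) := by
  induction X generalizing ρ with
  | nil => simp [foC, msC]
  | cons t ts ih => simp [foC, msC, ih, add_assoc]

theorem msC_sing (a : ℕ) (w : Wt) (t : BTree) : msC a w [t] = msT a w t := by
  simp [msC]

/-! Block sums. -/

theorem sum_blocks {M : Type*} [AddCommMonoid M] : ∀ {m : ℕ} (s : Fin m → ℕ) (g : ℕ → M),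
    ∑ x ∈ Finset.range (∑ k, s k), g x
      = ∑ k, ∑ n ∈ Finset.range (s k), g (off s k + n) := by
  intro m
  induction m with
  | zero => intro s g; simp
  | succ m ih =>
    intro s g
    rw [Fin.sum_univ_castSucc, Finset.sum_range_add, ih, Fin.sum_univ_castSucc]
    rfl

theorem sum_off {M : Type*} [AddCommMonoid M] {m : ℕ} (s : Fin m → ℕ) (k : Fin m) (g : ℕ → M) :
    ∑ x ∈ Finset.range (off s k), g x
      = ∑ l : Fin k.val, ∑ n ∈ Finset.range (s (Fin.castLE k.2.le l)),
          g (off s (Fin.castLE k.2.le l) + n) := by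
  unfold off
  rw [sum_blocks]
  rfl

theorem map_blocks {α : Type*} : ∀ {m : ℕ} (s : Fin m → ℕ) (g : ℕ → α),
    (List.range (∑ k, s k)).map g
      = (List.ofFn (fun k => (List.range (s k)).map (fun n => g (off s k + n)))).flatten := by
  intro m
  induction m with
  | zero => intro s g; simp
  | succ m ih =>
    intro s g
    rw [Fin.sum_univ_castSucc, List.range_add, List.map_append, ih, List.ofFn_succ',
      List.concat_eq_append, List.flatten_append]
    simp only [List.flatten_singleton, List.map_map]
    rfl

theorem exists_block : ∀ {m : ℕ} (s : Fin m → ℕ) (x : ℕ), x < ∑ k, s k →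
    ∃ k n, n < s k ∧ x = off s k + n := by
  intro m
  induction m with
  | zero => intro s x hx; simp at hx
  | succ m ih =>
    intro s x hx
    rw [Fin.sum_univ_castSucc] at hx
    by_cases h : x < ∑ k : Fin m, s k.castSucc
    · obtain ⟨k, n, hn, hk⟩ := ih _ x h
      exact ⟨k.castSucc, n, hn, hk⟩
    · refine ⟨Fin.last m, x - ∑ k : Fin m, s k.castSucc, by omega, ?_⟩
      change x = (∑ k : Fin m, s k.castSucc) + _
      omega

theorem off_lt_ne {m : ℕ} (s : Fin m → ℕ) {k l : Fin m} {n p : ℕ} (hn : n < s k) (hp : p < s l)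
    (h : off s k + n = off s l + p) : k = l := by
  have key : ∀ {k l : Fin m}, k < l → off s k + s k ≤ off s l := by
    intro k l hkl
    have h1 : off s k + s k = ∑ x : Fin (k.val + 1), s (Fin.castLE k.2 x) := by
      rw [Fin.sum_univ_castSucc]; rfl
    rw [h1]
    unfold off
    have hle : k.val + 1 ≤ l.val := hkl
    obtain ⟨d, hd⟩ := Nat.exists_eq_add_of_le hle
    have : ∀ (q : ℕ) (hq : q ≤ m) (_ : k.val + 1 ≤ q),
        ∑ x : Fin (k.val + 1), s (Fin.castLE k.2 x) ≤ ∑ x : Fin q, s (Fin.castLE hq x) := by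
      intro q
      induction q with
      | zero => intro _ h; omega
      | succ q ih =>
        intro hq hk
        rcases Nat.lt_or_ge k.val q with h | h
        · rw [Fin.sum_univ_castSucc (n := q)]
          exact le_trans (ih (by omega) h) (Nat.le_add_right _ _)
        · have : q = k.val := by omega
          subst this
          exact le_rfl
    exact this _ l.2.le hle
  rcases lt_trichotomy k l with h1 | h1 | h1
  · have := key h1; omega
  · exact h1
  · have := key h1; omega

/-! Specifications. -/

theorem sort_spec : (∀ t, TreeSort t (srtT t)) ∧ (∀ c, ConfigSort c (srt c)) := by
  apply treeConf_ind
  · simpa [msT] using TreeSort.sep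
  · intro A; simpa [msT] using TreeSort.type0 A
  · intro A; simpa [msT] using TreeSort.btype0 A
  · intro i A args ih; simpa [msT] using TreeSort.fig A args _ ih
  · intro i A args ih; simpa [msT] using TreeSort.bfig A args _ ih
  · simpa [msC] using ConfigSort.nil
  · intro t ts h1 h2; simpa [msC] using ConfigSort.cons h1 h2

theorem boxes_spec : (∀ t, TBoxes t (msT 0 wbox t)) ∧ (∀ c, CBoxes c (msC 0 wbox c)) := by
  apply treeConf_ind
  · simpa [msT] using TBoxes.sep
  · intro A; simpa [msT, wbox] using TBoxes.type0 A
  · intro A; simpa [msT, wbox] using TBoxes.btype0 A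
  · intro i A args ih; simpa [msT, wbox] using TBoxes.fig A args _ ih
  · intro i A args ih; simpa [msT, wbox, add_comm] using TBoxes.bfig A args _ ih
  · simpa [msC] using CBoxes.nil
  · intro t ts h1 h2; simpa [msC] using CBoxes.cons h1 h2

theorem cpx_spec :
    (∀ t, msT 0 wcpx t = 0 → ¬ TOcc (fun _ B => posb B = true ∧ isAtom B = false) t) ∧
    (∀ c, msC 0 wcpx c = 0 → ¬ COcc (fun _ B => posb B = true ∧ isAtom B = false) c) := by
  apply treeConf_ind
  · intro _ h; cases h
  · intro A h h'; cases h' with | type0 h' => simp [msT, h'] at h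
  · intro A h h'; cases h' with | btype0 h' => simp [msT, h'] at h
  · intro i A args ih h h'
    rw [msT, Nat.add_eq_zero_iff, Finset.sum_eq_zero_iff] at h
    cases h' with
    | figHead h' => simp [h'] at h
    | figArg k h' => exact ih k (h.2 k (Finset.mem_univ k)) h'
  · intro i A args ih h h'
    rw [msT, Nat.add_eq_zero_iff, Finset.sum_eq_zero_iff] at h
    cases h' with
    | bfigHead h' => simp [h'] at h
    | bfigArg k h' => exact ih k (h.2 k (Finset.mem_univ k)) h'
  · intro _ h; cases h
  · intro t ts h1 h2 h h'
    rw [msC, Nat.add_eq_zero_iff] at h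
    cases h' with
    | head h' => exact h1 h.1 h'
    | tail h' => exact h2 h.2 h'

theorem fold_spec : (∀ t ρ, FoldT t ((List.range (srtT t)).map ρ) (foT t ρ)) ∧
    (∀ c ρ, FoldC c ((List.range (srt c)).map ρ) (foC c ρ)) := by
  apply treeConf_ind
  · intro ρ; simpa [msT, foT] using FoldT.sep (ρ 0)
  · intro A ρ; simpa [msT, foT] using FoldT.type0 A
  · intro A ρ; simpa [msT, foT] using FoldT.btype0 A
  · intro i A args ih ρ
    have := FoldT.fig A args _ _ (fun k => ih k (fun n => ρ (off (fun l => srt (args l)) k + n)))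
    rw [← map_blocks] at this
    simpa [msT, foT] using this
  · intro i A args ih ρ
    have := FoldT.bfig A args _ _ (fun k => ih k (fun n => ρ (off (fun l => srt (args l)) k + n)))
    rw [← map_blocks] at this
    simpa [msT, foT] using this
  · intro ρ; simpa [msC, foC] using FoldC.nil
  · intro t ts h1 h2 ρ
    have := FoldC.cons (h1 ρ) (h2 (fun n => ρ (srtT t + n)))
    rw [srt, msC, List.range_add, List.map_append, foC, List.map_map]
    exact this

theorem fo_id : (∀ t, foT t (fun _ => [.sep]) = [t]) ∧ (∀ c, foC c (fun _ => [.sep]) = c) := by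
  apply treeConf_ind
  · simp [foT]
  · simp [foT]
  · simp [foT]
  · intro i A args ih; simp [foT, ih]
  · intro i A args ih; simp [foT, ih]
  · simp [foC]
  · intro t ts h1 h2; simp [foC, h1, h2]

theorem ms_fo (a : ℕ) (w : Wt) :
    (∀ t ρ, msC a w (foT t ρ) = msT 0 w t + ∑ n ∈ Finset.range (srtT t), msC a w (ρ n)) ∧
    (∀ c ρ, msC a w (foC c ρ) = msC 0 w c + ∑ n ∈ Finset.range (srt c), msC a w (ρ n)) := by
  apply treeConf_ind
  · intro ρ; simp [foT, msT]
  · intro A ρ; simp [foT, msT, msC]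
  · intro A ρ; simp [foT, msT, msC]
  · intro i A args ih ρ
    simp only [foT, msT, msC, ih, Finset.sum_add_distrib, zero_add, add_zero]
    rw [sum_blocks, add_assoc]
  · intro i A args ih ρ
    simp only [foT, msT, msC, ih, Finset.sum_add_distrib, zero_add, add_zero]
    rw [sum_blocks, add_assoc]
  · intro ρ; simp [foC, msC]
  · intro t ts h1 h2 ρ
    simp only [foC, msC_append, h1, h2, msC, Finset.sum_range_add, srt, srtT]
    omega

theorem ms_eq (a : ℕ) (w : Wt) (c : BConfig) : msC a w c = msC 0 w c + srt c * a := by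
  have := (ms_fo a w).2 c (fun _ => [.sep])
  rw [fo_id.2] at this
  rw [this]
  simp [msC, msT]

theorem fo_fo :
    (∀ t ρ σ, foC (foT t ρ) σ
      = foT t (fun n => foC (ρ n) (fun m => σ ((∑ x ∈ Finset.range n, srt (ρ x)) + m)))) ∧
    (∀ c ρ σ, foC (foC c ρ) σ
      = foC c (fun n => foC (ρ n) (fun m => σ ((∑ x ∈ Finset.range n, srt (ρ x)) + m)))) := by
  have aux : ∀ {i : ℕ} (args : Fin (i + 1) → BConfig) (ρ : ℕ → BConfig) (k : Fin (i + 1)),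
      off (fun l => srt (foC (args l) (fun n => ρ (off (fun l => srt (args l)) l + n)))) k
        = ∑ x ∈ Finset.range (off (fun l => srt (args l)) k), srt (ρ x) := by
    intro i args ρ k
    rw [sum_off]
    unfold off
    apply Finset.sum_congr rfl
    intro l _
    have h0 : ∀ c, msC 0 w0 c = 0 := by
      have : (∀ t, msT 0 w0 t = 0) ∧ (∀ c, msC 0 w0 c = 0) := by
        apply treeConf_ind <;> simp_all [msT, msC]
      exact this.2
    simp only [srt, (ms_fo 1 w0).2, h0, zero_add]
  apply treeConf_ind
  · intro ρ σ; simp [foT]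
  · intro A ρ σ; simp [foT, foC]
  · intro A ρ σ; simp [foT, foC]
  · intro i A args ih ρ σ
    simp only [foT, foC, List.append_nil, aux, ih, Finset.sum_range_add, add_assoc]
  · intro i A args ih ρ σ
    simp only [foT, foC, List.append_nil, aux, ih, Finset.sum_range_add, add_assoc]
  · intro ρ σ; simp [foC]
  · intro t ts h1 h2 ρ σ
    have h0 : ∀ t, msT 0 w0 t = 0 := by
      have : (∀ t, msT 0 w0 t = 0) ∧ (∀ c, msC 0 w0 c = 0) := by
        apply treeConf_ind <;> simp_all [msT, msC]
      exact this.1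
    simp only [foC, foC_append, h1, h2, Finset.sum_range_add, add_assoc, srt, (ms_fo 1 w0).1, h0,
      zero_add]

theorem update_shift (ρ : ℕ → BConfig) (a n : ℕ) (c : BConfig) :
    (fun m => Function.update ρ (a + n) c (a + m))
      = Function.update (fun m => ρ (a + m)) n c := by
  funext m
  by_cases h : m = n
  · subst h; simp
  · rw [Function.update_of_ne h, Function.update_of_ne (by omega)]

theorem fo_congr :
    (∀ t ρ σ, (∀ n < srtT t, ρ n = σ n) → foT t ρ = foT t σ) ∧
    (∀ c ρ σ, (∀ n < srt c, ρ n = σ n) → foC c ρ = foC c σ) := by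
  have aux : ∀ {i : ℕ} (s : Fin (i + 1) → ℕ) (k : Fin (i + 1)) (n : ℕ), n < s k →
      off s k + n < ∑ k, s k := by
    intro i s k n hn
    have h1 : off s k + s k = ∑ x : Fin (k.val + 1), s (Fin.castLE k.2 x) := by
      rw [Fin.sum_univ_castSucc]; rfl
    have h2 : ∑ x : Fin (k.val + 1), s (Fin.castLE k.2 x) ≤ ∑ k, s k := by
      rw [← Finset.sum_image (s := Finset.univ) (g := Fin.castLE k.2) (f := s)
        (fun a _ b _ h => Fin.castLE_injective _ h)]
      exact Finset.sum_le_sum_of_subset (Finset.subset_univ _)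
    omega
  apply treeConf_ind
  · intro ρ σ h; simpa [foT, msT] using h
  · intro A ρ σ h; simp [foT]
  · intro A ρ σ h; simp [foT]
  · intro i A args ih ρ σ h
    simp only [foT, msT, zero_add] at h ⊢
    congr 2
    funext k
    exact ih k _ _ (fun n hn => h _ (aux _ k n hn))
  · intro i A args ih ρ σ h
    simp only [foT, msT, zero_add] at h ⊢
    congr 2
    funext k
    exact ih k _ _ (fun n hn => h _ (aux _ k n hn))
  · intro ρ σ h; simp [foC]
  · intro t ts h1 h2 ρ σ h
    simp only [foC, msC] at h ⊢
    rw [h1 ρ σ (fun n hn => h n (Nat.lt_of_lt_of_le hn (Nat.le_add_right _ _))),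
      h2 _ _ (fun n hn => h _ (Nat.add_lt_add_left hn _))]

theorem fo_hole :
    (∀ t ρ k, k < srtT t → ∃ g, ∀ c, foT t (Function.update ρ k c) = plC g c) ∧
    (∀ Δ ρ k, k < srt Δ → ∃ g, ∀ c, foC Δ (Function.update ρ k c) = plC g c) := by
  have aux : ∀ {i : ℕ} (args : Fin (i + 1) → BConfig) (ρ : ℕ → BConfig) (x : ℕ),
      (∀ k : Fin (i + 1), ∀ ρ n, n < srt (args k) →
        ∃ g, ∀ c, foC (args k) (Function.update ρ n c) = plC g c) →
      x < ∑ k, srt (args k) →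
      ∃ (bs : Fin (i + 1) → BConfig) (k : Fin (i + 1)) (g : CHole), ∀ c,
        (fun k => foC (args k)
          (fun n => Function.update ρ x c (off (fun l => srt (args l)) k + n)))
          = Function.update bs k (plC g c) := by
    intro i args ρ x ih hx
    obtain ⟨k, n, hn, rfl⟩ := exists_block _ x hx
    obtain ⟨g, hg⟩ := ih k (fun m => ρ (off (fun l => srt (args l)) k + m)) n hn
    refine ⟨fun k => foC (args k) (fun n => ρ (off (fun l => srt (args l)) k + n)), k, g, ?_⟩
    intro c
    funext l
    by_cases h : l = k
    · subst h
      rw [Function.update_self, update_shift, hg]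
    · rw [Function.update_of_ne h]
      apply fo_congr.2
      intro p hp
      apply Function.update_of_ne
      intro h'
      exact h (off_lt_ne (fun l => srt (args l)) hp hn h')
  apply treeConf_ind
  · intro ρ k hk
    have : k = 0 := by simpa [msT] using hk
    subst this
    exact ⟨.top [] [], fun c => by simp [foT, plC]⟩
  · intro A ρ k hk; simp [msT] at hk
  · intro A ρ k hk; simp [msT] at hk
  · intro i A args ih ρ x hx
    simp only [msT, zero_add] at hx
    obtain ⟨bs, k, g, hg⟩ := aux args ρ x ih hx
    exact ⟨.deep [] (.fig A bs k g) [], fun c => by simp only [foT, plC, plT, hg, List.nil_append]⟩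
  · intro i A args ih ρ x hx
    simp only [msT, zero_add] at hx
    obtain ⟨bs, k, g, hg⟩ := aux args ρ x ih hx
    exact ⟨.deep [] (.bfig A bs k g) [], fun c => by simp only [foT, plC, plT, hg, List.nil_append]⟩
  · intro ρ k hk; simp [msC] at hk
  · intro t ts h1 h2 ρ k hk
    simp only [msC] at hk
    by_cases h : k < srtT t
    · obtain ⟨g, hg⟩ := h1 ρ k h
      obtain ⟨g', hg'⟩ := plC_comp (.top [] (foC ts (fun n => ρ (srtT t + n)))) g
      refine ⟨g', fun c => ?_⟩
      rw [hg', ← hg, foC, plC, List.nil_append]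
      congr 2
      funext n
      exact Function.update_of_ne (by omega) _ _
    · obtain ⟨n, rfl⟩ := Nat.exists_eq_add_of_le (Nat.le_of_not_lt h)
      obtain ⟨g, hg⟩ := h2 (fun m => ρ (srtT t + m)) n (Nat.lt_of_add_lt_add_left hk)
      obtain ⟨g', hg'⟩ := plC_comp (.top (foT t ρ) []) g
      refine ⟨g', fun c => ?_⟩
      rw [hg', ← hg, foC, plC, List.append_nil, update_shift]
      congr 1
      apply fo_congr.1
      intro m hm
      exact Function.update_of_ne (by omega) _ _

/-! ### Wrapping and contexts -/

/-- Wrapping as a function. -/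
def wr (Δ : BConfig) (k : ℕ) (Γ : BConfig) : BConfig :=
  foC Δ (Function.update (fun _ => [BTree.sep]) (k - 1) Γ)

theorem wr_spec (Δ : BConfig) (k : ℕ) (Γ : BConfig) : Wrap Δ k Γ (wr Δ k Γ) := by
  refine ⟨srt Δ, sort_spec.2 Δ, ?_⟩
  have := fold_spec.2 Δ (Function.update (fun _ => [BTree.sep]) (k - 1) Γ)
  have e : (List.range (srt Δ)).map (Function.update (fun _ => [BTree.sep]) (k - 1) Γ)
      = (List.replicate (srt Δ) ([BTree.sep] : BConfig)).set (k - 1) Γ := by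
    apply List.ext_getElem
    · simp
    · intro n h1 h2
      simp only [List.getElem_map, List.getElem_range, List.getElem_set, List.getElem_replicate]
      by_cases h : k - 1 = n
      · subst h; simp
      · rw [if_neg h, Function.update_of_ne (fun h' => h h'.symm)]
  rw [e] at this
  exact this

theorem ms_wr (a : ℕ) (w : Wt) (Δ X : BConfig) (k : ℕ) (hk : k - 1 < srt Δ) :
    msC a w (wr Δ k X) + a = msC a w Δ + msC a w X := by
  have e : ∀ n, msC a w (Function.update (fun _ => [BTree.sep]) (k - 1) X n)
      = Function.update (fun _ => a) (k - 1) (msC a w X) n := by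
    intro n
    by_cases h : n = k - 1
    · subst h; simp
    · simp [Function.update_of_ne h, msC, msT]
  rw [wr, (ms_fo a w).2, ms_eq a w Δ]
  simp only [e]
  rw [Finset.sum_update_of_mem (Finset.mem_range.2 hk), Finset.sum_const,
    Finset.card_sdiff_of_subset (by simpa using hk)]
  obtain ⟨s, hs⟩ : ∃ s, srt Δ = s + 1 := ⟨srt Δ - 1, by omega⟩
  rw [hs]
  simp
  ring

/-- The replacements left after wrapping. -/
def shf (ρ : ℕ → BConfig) (p s : ℕ) : ℕ → BConfig :=
  fun n => if n < p then ρ n else ρ (n - 1 + s)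

theorem fo_wr (Δ X : BConfig) (k : ℕ) (ρ : ℕ → BConfig) :
    foC (wr Δ k X) ρ
      = foC Δ (Function.update (shf ρ (k - 1) (srt X)) (k - 1)
          (foC X (fun m => ρ (k - 1 + m)))) := by
  rw [wr, fo_fo.2]
  generalize k - 1 = p
  congr 1
  have hlow : ∀ n, n ≤ p →
      ∑ x ∈ Finset.range n, srt (Function.update (fun _ => [BTree.sep]) p X x) = n := by
    intro n hn
    rw [Finset.sum_congr rfl (g := fun _ => 1)]
    · simp
    · intro x hx
      have : x ≠ p := by have := Finset.mem_range.1 hx; omega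
      simp [Function.update_of_ne this, msC, msT]
  have hhigh : ∀ d,
      ∑ x ∈ Finset.range (p + 1 + d), srt (Function.update (fun _ => [BTree.sep]) p X x)
        = p + d + srt X := by
    intro d
    induction d with
    | zero => rw [add_zero, Finset.sum_range_succ, hlow p le_rfl]; simp
    | succ d ih =>
      rw [← add_assoc, Finset.sum_range_succ, ih,
        Function.update_of_ne (by omega)]
      simp [msC, msT]
      omega
  funext n
  rcases lt_trichotomy n p with h | h | h
  · rw [hlow n h.le, Function.update_of_ne h.ne, Function.update_of_ne h.ne]
    simp [foC, foT, shf, h]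
  · subst h
    rw [hlow n le_rfl, Function.update_self, Function.update_self]
  · obtain ⟨d, rfl⟩ := Nat.exists_eq_add_of_le (Nat.succ_le_of_lt h)
    rw [Nat.succ_eq_add_one, hhigh d, Function.update_of_ne (by omega),
      Function.update_of_ne (by omega)]
    have h1 : ¬ (p + 1 + d < p) := by omega
    have h2 : p + 1 + d - 1 = p + d := by omega
    simp [foC, foT, shf, h1, h2]

/-- `F` is (extensionally, on sort `i`) a context. -/
def Ctx (i : ℕ) (F : BConfig → BConfig) : Prop :=
  ∃ (h : CHole) (ρ : ℕ → BConfig), ∀ X, srt X = i → F X = plC h (foC X ρ)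

theorem Ctx.sub {i : ℕ} {F : BConfig → BConfig} (hF : Ctx i F) :
    ∃ Z : Zone, ∀ X, srt X = i → Sub Z X (F X) := by
  obtain ⟨h, ρ, H⟩ := hF
  refine ⟨⟨h, (List.range i).map ρ⟩, fun X hX => ⟨foC X ρ, ?_, ?_⟩⟩
  · have := fold_spec.2 X ρ
    rw [hX] at this
    exact this
  · rw [H X hX]; exact plC_spec h _

theorem ctx_id (i : ℕ) : Ctx i (fun X => X) :=
  ⟨.top [] [], fun _ => [.sep], fun X _ => by simp [plC, fo_id.2]⟩

theorem ctx_appR {i j : ℕ} {F : BConfig → BConfig} (hF : Ctx (i + j) F) {Δ : BConfig}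
    (hΔ : srt Δ = j) : Ctx i (fun X => F (X ++ Δ)) := by
  obtain ⟨h, ρ, H⟩ := hF
  obtain ⟨h', H'⟩ := plC_comp h (.top [] (foC Δ (fun n => ρ (i + n))))
  refine ⟨h', ρ, fun X hX => ?_⟩
  beta_reduce
  rw [H _ (by rw [srt, msC_append]; exact congrArg₂ _ hX hΔ), H', foC_append, hX, plC,
    List.nil_append]

theorem ctx_appL {i j : ℕ} {F : BConfig → BConfig} (hF : Ctx (i + j) F) {Δ : BConfig}
    (hΔ : srt Δ = i) : Ctx j (fun X => F (Δ ++ X)) := by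
  obtain ⟨h, ρ, H⟩ := hF
  obtain ⟨h', H'⟩ := plC_comp h (.top (foC Δ ρ) [])
  refine ⟨h', fun n => ρ (i + n), fun X hX => ?_⟩
  beta_reduce
  rw [H _ (by rw [srt, msC_append]; exact congrArg₂ _ hΔ hX), H', foC_append, hΔ, plC,
    List.append_nil]

theorem srt_wr {i j k : ℕ} (hk : 1 ≤ k ∧ k ≤ i + 1) {Δ X : BConfig} (hΔ : srt Δ = i + 1)
    (hX : srt X = j) : srt (wr Δ k X) = i + j := by
  have h1 : k - 1 < srt Δ := by omega
  have := ms_wr 1 w0 Δ X k h1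
  simp only [srt] at *
  omega

theorem ms0_wr {i k : ℕ} (hk : 1 ≤ k ∧ k ≤ i + 1) {Δ X : BConfig} (hΔ : srt Δ = i + 1) (w : Wt) :
    msC 0 w (wr Δ k X) = msC 0 w Δ + msC 0 w X :=
  ms_wr 0 w Δ X k (by omega)

theorem ctx_wrL {i j k : ℕ} (hk : 1 ≤ k ∧ k ≤ i + 1) {F : BConfig → BConfig} (hF : Ctx (i + j) F)
    {Δ : BConfig} (hΔ : srt Δ = j) : Ctx (i + 1) (fun X => F (wr X k Δ)) := by
  obtain ⟨h, ρ, H⟩ := hF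
  refine ⟨h, Function.update (shf ρ (k - 1) (srt Δ)) (k - 1)
    (foC Δ (fun m => ρ (k - 1 + m))), fun X hX => ?_⟩
  beta_reduce
  rw [H _ (srt_wr hk hX hΔ), fo_wr]

theorem ctx_wrR {i j k : ℕ} (hk : 1 ≤ k ∧ k ≤ i + 1) {F : BConfig → BConfig} (hF : Ctx (i + j) F)
    {Δ : BConfig} (hΔ : srt Δ = i + 1) : Ctx j (fun X => F (wr Δ k X)) := by
  obtain ⟨h, ρ, H⟩ := hF
  obtain ⟨g, hg⟩ := fo_hole.2 Δ (shf ρ (k - 1) j) (k - 1) (by omega)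
  obtain ⟨h', H'⟩ := plC_comp h g
  refine ⟨h', fun m => ρ (k - 1 + m), fun X hX => ?_⟩
  beta_reduce
  rw [H _ (srt_wr hk hΔ hX), fo_wr, hX, hg, H']

/-- `F` adds no weight. -/
def Pres (w : Wt) (i : ℕ) (F : BConfig → BConfig) : Prop :=
  ∀ X, srt X = i → msC 0 w (F X) = msC 0 w X

theorem srt_app {i j : ℕ} {X Y : BConfig} (hX : srt X = i) (hY : srt Y = j) :
    srt (X ++ Y) = i + j := by
  rw [srt, msC_append]; exact congrArg₂ _ hX hY

theorem pres_appR {w : Wt} {i j : ℕ} {F : BConfig → BConfig} (hF : Pres w (i + j) F) {Δ : BConfig}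
    (hΔ : srt Δ = j) (h0 : msC 0 w Δ = 0) : Pres w i (fun X => F (X ++ Δ)) := by
  intro X hX
  rw [hF _ (srt_app hX hΔ), msC_append, h0, add_zero]

theorem pres_appL {w : Wt} {i j : ℕ} {F : BConfig → BConfig} (hF : Pres w (i + j) F) {Δ : BConfig}
    (hΔ : srt Δ = i) (h0 : msC 0 w Δ = 0) : Pres w j (fun X => F (Δ ++ X)) := by
  intro X hX
  rw [hF _ (srt_app hΔ hX), msC_append, h0, zero_add]

theorem pres_wrL {w : Wt} {i j k : ℕ} (hk : 1 ≤ k ∧ k ≤ i + 1) {F : BConfig → BConfig}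
    (hF : Pres w (i + j) F) {Δ : BConfig} (hΔ : srt Δ = j) (h0 : msC 0 w Δ = 0) :
    Pres w (i + 1) (fun X => F (wr X k Δ)) := by
  intro X hX
  rw [hF _ (srt_wr hk hX hΔ), ms0_wr hk hX, h0, add_zero]

theorem pres_wrR {w : Wt} {i j k : ℕ} (hk : 1 ≤ k ∧ k ≤ i + 1) {F : BConfig → BConfig}
    (hF : Pres w (i + j) F) {Δ : BConfig} (hΔ : srt Δ = i + 1) (h0 : msC 0 w Δ = 0) :
    Pres w j (fun X => F (wr Δ k X)) := by
  intro X hX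
  rw [hF _ (srt_wr hk hΔ hX), ms0_wr hk hΔ, h0, zero_add]

theorem ms_vec (a : ℕ) (w : Wt) {i : ℕ} (A : Ty i) : msC a w (vec A) = w false i A + i * a := by
  cases i <;> simp [vec, vecT, msC, msT]

theorem ms_bvec (a : ℕ) (w : Wt) {i : ℕ} (A : Ty i) : msC a w (bvec A) = w true i A + i * a := by
  cases i <;> simp [bvec, bvecT, msC, msT]

theorem srt_vec {i : ℕ} (A : Ty i) : srt (vec A) = i := by simp [ms_vec]
theorem srt_bvec {i : ℕ} (A : Ty i) : srt (bvec A) = i := by simp [ms_bvec]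
theorem srt_fvec {i : ℕ} (A : Ty i) : srt (fvec A) = i := by
  unfold fvec; split
  · exact srt_vec A
  · exact srt_bvec A
theorem box_vec {i : ℕ} (A : Ty i) : msC 0 wbox (vec A) = 0 := by simp [ms_vec, wbox]

/-! ### Asynchronous decompositions -/

/-- Induction on types (dependent motive in the sort). -/
theorem tyInd {motive : ∀ i : ℕ, Ty i → Prop}
    (atom : ∀ b n i, motive i (.atom b n i))
    (slash : ∀ {i j : ℕ} (C : Ty (i + j)) (B : Ty j), motive _ C → motive _ B →
      motive _ (.over C B))
    (under : ∀ {i j : ℕ} (A : Ty i) (C : Ty (i + j)), motive _ A → motive _ C →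
      motive _ (.under A C))
    (prod : ∀ {i j : ℕ} (A : Ty i) (B : Ty j), motive _ A → motive _ B → motive _ (.prod A B))
    (unitI : motive 0 .unitI)
    (circ : ∀ {i j : ℕ} (k : ℕ) (hk : 1 ≤ k ∧ k ≤ i + 1) (C : Ty (i + j)) (B : Ty j),
      motive _ C → motive _ B → motive _ (.circ k hk C B))
    (infx : ∀ {i j : ℕ} (k : ℕ) (hk : 1 ≤ k ∧ k ≤ i + 1) (A : Ty (i + 1)) (C : Ty (i + j)),
      motive _ A → motive _ C → motive _ (.infx k hk A C))
    (wprod : ∀ {i j : ℕ} (k : ℕ) (hk : 1 ≤ k ∧ k ≤ i + 1) (A : Ty (i + 1)) (B : Ty j),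
      motive _ A → motive _ B → motive _ (.wprod k hk A B))
    (unitJ : motive 1 .unitJ)
    (amp : ∀ {i : ℕ} (A B : Ty i), motive _ A → motive _ B → motive _ (.amp A B))
    (oplus : ∀ {i : ℕ} (A B : Ty i), motive _ A → motive _ B → motive _ (.oplus A B)) :
    ∀ {i : ℕ} (A : Ty i), motive i A := by
  intro i A
  exact Ty.rec (motive := motive) atom slash under prod unitI circ infx wprod unitJ amp oplus A

/-- Complete antecedent asynchronous decompositions of a type. -/
def Dec : {i : ℕ} → Ty i → BConfig → Prop
  | _, .prod A B, X => ∃ Y Z, Dec A Y ∧ Dec B Z ∧ X = Y ++ Z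
  | _, .unitI, X => X = []
  | _, .wprod k _ A B, X => ∃ Y Z, Dec A Y ∧ Dec B Z ∧ X = wr Y k Z
  | _, .unitJ, X => X = [.sep]
  | _, .oplus A B, X => Dec A X ∨ Dec B X
  | _, .atom b n i, X => X = vec (.atom b n i)
  | _, .over C B, X => X = vec (.over C B)
  | _, .under A C, X => X = vec (.under A C)
  | _, .circ k hk C B, X => X = vec (.circ k hk C B)
  | _, .infx k hk A C, X => X = vec (.infx k hk A C)
  | _, .amp A B, X => X = vec (.amp A B)

/-- Complete succedent asynchronous decompositions of a type: a context for the
antecedent together with a new succedent. -/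
def RDec : {i : ℕ} → Ty i → (BConfig → BConfig) → (d : ℕ) → Ty d → Prop
  | _, .over C B, F, d, D =>
      ∃ Y G, Dec B Y ∧ RDec C G d D ∧ F = fun X => G (X ++ Y)
  | _, .under A C, F, d, D =>
      ∃ Y G, Dec A Y ∧ RDec C G d D ∧ F = fun X => G (Y ++ X)
  | _, .circ k _ C B, F, d, D =>
      ∃ Y G, Dec B Y ∧ RDec C G d D ∧ F = fun X => G (wr X k Y)
  | _, .infx k _ A C, F, d, D =>
      ∃ Y G, Dec A Y ∧ RDec C G d D ∧ F = fun X => G (wr Y k X)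
  | _, .amp A B, F, d, D => RDec A F d D ∨ RDec B F d D
  | i, A, F, d, D => F = (fun X => X) ∧ (⟨i, A⟩ : Σ i, Ty i) = ⟨d, D⟩

theorem dec_facts : ∀ {i : ℕ} (A : Ty i) (X : BConfig), Dec A X →
    srt X = i ∧ msC 0 wbox X = 0 ∧ msC 0 wcpx X = 0 := by
  intro i A
  induction A using tyInd with
  | prod A B ihA ihB =>
    rintro X ⟨Y, Z, hY, hZ, rfl⟩
    obtain ⟨a, b, c⟩ := ihA Y hY
    obtain ⟨a', b', c'⟩ := ihB Z hZ
    exact ⟨srt_app a a', by rw [msC_append, b, b'], by rw [msC_append, c, c']⟩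
  | wprod k hk A B ihA ihB =>
    rintro X ⟨Y, Z, hY, hZ, rfl⟩
    obtain ⟨a, b, c⟩ := ihA Y hY
    obtain ⟨a', b', c'⟩ := ihB Z hZ
    exact ⟨srt_wr hk a a', by rw [ms0_wr hk a, b, b'], by rw [ms0_wr hk a, c, c']⟩
  | unitI => rintro X rfl; simp [msC]
  | unitJ => rintro X rfl; simp [msC, msT]
  | oplus A B ihA ihB =>
    rintro X (h | h)
    · exact ihA X h
    · exact ihB X h
  | _ => rintro X rfl; exact ⟨srt_vec _, box_vec _, by simp [ms_vec, wcpx, posb, isAtom]⟩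

theorem rdec_facts : ∀ {i : ℕ} (A : Ty i) (F : BConfig → BConfig) (d : ℕ) (D : Ty d),
    RDec A F d D → Ctx i F ∧ Pres wbox i F ∧ Pres wcpx i F ∧
      ¬ (posb D = false ∧ isAtom D = false) := by
  intro i A
  induction A using tyInd with
  | slash C B ihC ihB =>
    rintro F d D ⟨Y, G, hY, hG, rfl⟩
    obtain ⟨a, b, c⟩ := dec_facts _ Y hY
    obtain ⟨h1, h2, h3, h4⟩ := ihC G d D hG
    exact ⟨ctx_appR h1 a, pres_appR h2 a b, pres_appR h3 a c, h4⟩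
  | under A C ihA ihC =>
    rintro F d D ⟨Y, G, hY, hG, rfl⟩
    obtain ⟨a, b, c⟩ := dec_facts _ Y hY
    obtain ⟨h1, h2, h3, h4⟩ := ihC G d D hG
    exact ⟨ctx_appL h1 a, pres_appL h2 a b, pres_appL h3 a c, h4⟩
  | circ k hk C B ihC ihB =>
    rintro F d D ⟨Y, G, hY, hG, rfl⟩
    obtain ⟨a, b, c⟩ := dec_facts _ Y hY
    obtain ⟨h1, h2, h3, h4⟩ := ihC G d D hG
    exact ⟨ctx_wrL hk h1 a, pres_wrL hk h2 a b, pres_wrL hk h3 a c, h4⟩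
  | infx k hk A C ihA ihC =>
    rintro F d D ⟨Y, G, hY, hG, rfl⟩
    obtain ⟨a, b, c⟩ := dec_facts _ Y hY
    obtain ⟨h1, h2, h3, h4⟩ := ihC G d D hG
    exact ⟨ctx_wrR hk h1 a, pres_wrR hk h2 a b, pres_wrR hk h3 a c, h4⟩
  | amp A B ihA ihB =>
    rintro F d D (h | h)
    · exact ihA F d D h
    · exact ihB F d D h
  | _ =>
    rintro F d D ⟨rfl, h⟩
    cases h
    exact ⟨ctx_id _, fun _ _ => rfl, fun _ _ => rfl, by simp [posb, isAtom]⟩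

/-! ### Side conditions -/

theorem amo_of {Δ : BConfig} (f : Bool) (h : msC 0 wbox Δ = 0) : AtMostOne Δ f := by
  have := boxes_spec.2 Δ
  rw [h] at this
  unfold AtMostOne
  split
  · exact this
  · exact Or.inl this

theorem amo_of1 {Δ : BConfig} (h : msC 0 wbox Δ = 1) : AtMostOne Δ false := by
  have := boxes_spec.2 Δ
  rw [h] at this
  exact Or.inr this

theorem ok_of {Δ : BConfig} {i : ℕ} {A : Ty i} (h : msC 0 wbox Δ = 0) :
    Ok true Δ false i A := by
  have := boxes_spec.2 Δ
  rw [h] at this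
  rintro - ⟨h1 | h1, -⟩
  · cases h1
  · exact h1 this

theorem ok_of' {Δ : BConfig} {f : Bool} {i : ℕ} {A : Ty i} (h : msC 0 wcpx Δ = 0)
    (hA : ¬ (posb A = false ∧ isAtom A = false)) : Ok true Δ f i A := by
  rintro - ⟨-, h1 | h1⟩
  · exact cpx_spec.2 Δ h h1
  · exact hA h1

/-! ### The main lemmas -/

/-- Antecedent asynchronous phase. -/
theorem left_phase : ∀ {i : ℕ} (A : Ty i) (F : BConfig → BConfig) (d : ℕ) (D : Ty d),
    Ctx i F → Pres wbox i F → (∀ X, Dec A X → DAFoc (F X) false d D) →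
    DAFoc (F (vec A)) false d D := by
  intro i A
  induction A using tyInd with
  | prod A B ihA ihB =>
    intro F d D hF hP H
    obtain ⟨Z, hZ⟩ := hF.sub
    have hb : msC 0 wbox (F (vec (.prod A B))) = 0 := by rw [hP _ (srt_vec _), box_vec]
    refine DW.prodL (hZ _ (srt_app (srt_vec A) (srt_vec B))) ?_ (hZ _ (srt_vec _))
      (amo_of _ hb) (ok_of hb)
    refine ihA (fun X => F (X ++ vec B)) d D (ctx_appR hF (srt_vec B))
      (pres_appR hP (srt_vec B) (box_vec B)) (fun X hX => ?_)
    obtain ⟨a, b, c⟩ := dec_facts _ X hX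
    exact ihB (fun Y => F (X ++ Y)) d D (ctx_appL hF a) (pres_appL hP a b)
      (fun Y hY => H _ ⟨X, Y, hX, hY, rfl⟩)
  | wprod k hk A B ihA ihB =>
    intro F d D hF hP H
    obtain ⟨Z, hZ⟩ := hF.sub
    have hb : msC 0 wbox (F (vec (.wprod k hk A B))) = 0 := by rw [hP _ (srt_vec _), box_vec]
    refine DW.wprodL k hk (wr_spec (vec A) k (vec B)) (hZ _ (srt_wr hk (srt_vec A) (srt_vec B))) ?_
      (hZ _ (srt_vec _)) (amo_of _ hb) (ok_of hb)
    refine ihA (fun X => F (wr X k (vec B))) d D (ctx_wrL hk hF (srt_vec B))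
      (pres_wrL hk hP (srt_vec B) (box_vec B)) (fun X hX => ?_)
    obtain ⟨a, b, c⟩ := dec_facts _ X hX
    exact ihB (fun Y => F (wr X k Y)) d D (ctx_wrR hk hF a) (pres_wrR hk hP a b)
      (fun Y hY => H _ ⟨X, Y, hX, hY, rfl⟩)
  | unitI =>
    intro F d D hF hP H
    obtain ⟨Z, hZ⟩ := hF.sub
    have hb : msC 0 wbox (F (vec .unitI)) = 0 := by rw [hP _ (srt_vec _), box_vec]
    exact DW.unitIL (hZ [] (by simp [msC])) (H [] rfl) (hZ _ (srt_vec _)) (amo_of _ hb) (ok_of hb)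
  | unitJ =>
    intro F d D hF hP H
    obtain ⟨Z, hZ⟩ := hF.sub
    have hb : msC 0 wbox (F (vec .unitJ)) = 0 := by rw [hP _ (srt_vec _), box_vec]
    exact DW.unitJL (hZ [.sep] (by simp [msC, msT])) (H [.sep] rfl) (hZ _ (srt_vec _))
      (amo_of _ hb) (ok_of hb)
  | oplus A B ihA ihB =>
    intro F d D hF hP H
    obtain ⟨Z, hZ⟩ := hF.sub
    have hb : msC 0 wbox (F (vec (.oplus A B))) = 0 := by rw [hP _ (srt_vec _), box_vec]
    exact DW.oplusL (hZ _ (srt_vec A)) (ihA F d D hF hP (fun X hX => H X (Or.inl hX)))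
      (hZ _ (srt_vec B)) (ihB F d D hF hP (fun X hX => H X (Or.inr hX)))
      (hZ _ (srt_vec _)) (amo_of _ hb) (ok_of hb)
  | _ => intro F d D _ _ H; exact H _ rfl

/-- Succedent asynchronous phase. -/
theorem right_phase : ∀ {i : ℕ} (A : Ty i) (Γ : BConfig), srt Γ = i → msC 0 wbox Γ = 0 →
    (∀ F d D, RDec A F d D → DAFoc (F Γ) false d D) → DAFoc Γ false i A := by
  intro i A
  induction A using tyInd with
  | slash C B ihC ihB =>
    intro Γ hs hb H
    refine DW.overR ?_ (amo_of _ hb) (ok_of hb)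
    refine left_phase B (fun X => Γ ++ X) _ C (ctx_appL (ctx_id _) hs)
      (pres_appL (F := fun X => X) (fun _ _ => rfl) hs hb) (fun X hX => ?_)
    obtain ⟨a, b, c⟩ := dec_facts _ X hX
    exact ihC _ (srt_app hs a) (by rw [msC_append, hb, b])
      (fun G d D hG => H _ d D ⟨X, G, hX, hG, rfl⟩)
  | under A C ihA ihC =>
    intro Γ hs hb H
    refine DW.underR ?_ (amo_of _ hb) (ok_of hb)
    refine left_phase A (fun X => X ++ Γ) _ C (ctx_appR (ctx_id _) hs)
      (pres_appR (F := fun X => X) (fun _ _ => rfl) hs hb) (fun X hX => ?_)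
    obtain ⟨a, b, c⟩ := dec_facts _ X hX
    exact ihC _ (srt_app a hs) (by rw [msC_append, hb, b])
      (fun G d D hG => H _ d D ⟨X, G, hX, hG, rfl⟩)
  | circ k hk C B ihC ihB =>
    intro Γ hs hb H
    refine DW.circR k hk (wr_spec Γ k (vec B)) ?_ (amo_of _ hb) (ok_of hb)
    refine left_phase B (fun X => wr Γ k X) _ C (ctx_wrR hk (ctx_id _) hs)
      (pres_wrR (F := fun X => X) hk (fun _ _ => rfl) hs hb) (fun X hX => ?_)
    obtain ⟨a, b, c⟩ := dec_facts _ X hX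
    exact ihC _ (srt_wr hk hs a) (by rw [ms0_wr hk hs, hb, b])
      (fun G d D hG => H _ d D ⟨X, G, hX, hG, rfl⟩)
  | infx k hk A C ihA ihC =>
    intro Γ hs hb H
    refine DW.infxR k hk (wr_spec (vec A) k Γ) ?_ (amo_of _ hb) (ok_of hb)
    refine left_phase A (fun X => wr X k Γ) _ C (ctx_wrL hk (ctx_id _) hs)
      (pres_wrL (F := fun X => X) hk (fun _ _ => rfl) hs hb) (fun X hX => ?_)
    obtain ⟨a, b, c⟩ := dec_facts _ X hX
    exact ihC _ (srt_wr hk a hs) (by rw [ms0_wr hk a, hb, b])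
      (fun G d D hG => H _ d D ⟨X, G, hX, hG, rfl⟩)
  | amp A B ihA ihB =>
    intro Γ hs hb H
    exact DW.ampR (ihA Γ hs hb (fun F d D h => H F d D (Or.inl h)))
      (ihB Γ hs hb (fun F d D h => H F d D (Or.inr h))) (amo_of _ hb) (ok_of hb)
  | _ => intro Γ hs hb H; exact H _ _ _ ⟨rfl, rfl⟩

/-- The three statements proved simultaneously by induction on the type. -/
def Main {i : ℕ} (A : Ty i) : Prop :=
  DAFoc (vec A) false i A ∧ (∀ X, Dec A X → DAFoc X (posb A) i A) ∧
    (∀ F d D, RDec A F d D → DAFoc (F (fvec A)) false d D)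

/-- Eta from the focused right phase, for positive types. -/
theorem main_pos {i : ℕ} {A : Ty i} (hA : posb A = true)
    (hR : ∀ F d D, RDec A F d D → F = (fun X => X) ∧ (⟨i, A⟩ : Σ i, Ty i) = ⟨d, D⟩)
    (h : ∀ X, Dec A X → DAFoc X true i A) : Main A := by
  have e : DAFoc (vec A) false i A := by
    refine left_phase A (fun X => X) i A (ctx_id i) (fun _ _ => rfl) (fun X hX => ?_)
    obtain ⟨a, b, c⟩ := dec_facts _ X hX
    exact DW.focR hA (h X hX) (amo_of _ b) (ok_of b)
  refine ⟨e, by rw [hA]; exact h, fun F d D hF => ?_⟩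
  obtain ⟨rfl, h'⟩ := hR F d D hF
  cases h'
  rw [fvec, if_pos hA]
  exact e

/-- Eta from the focused left phase, for negative types. -/
theorem main_neg {i : ℕ} {A : Ty i} (hA : posb A = false)
    (hD : ∀ X, Dec A X → X = vec A)
    (h : ∀ F d D, RDec A F d D → DAFoc (F (bvec A)) false d D) : Main A := by
  have e : DAFoc (vec A) false i A := by
    refine right_phase A _ (srt_vec A) (box_vec A) (fun F d D hF => ?_)
    obtain ⟨h1, h2, h3, h4⟩ := rdec_facts _ F d D hF
    obtain ⟨Z, hZ⟩ := h1.sub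
    have hb : msC 0 wbox (F (vec A)) = 0 := by rw [h2 _ (srt_vec _), box_vec]
    exact DW.focL hA (hZ _ (srt_bvec A)) (h F d D hF) (hZ _ (srt_vec A)) (amo_of _ hb) (ok_of hb)
  refine ⟨e, fun X hX => ?_, fun F d D hF => ?_⟩
  · rw [hD X hX, hA]; exact e
  · rw [fvec, if_neg (by simp [hA])]; exact h F d D hF

/-- Side conditions of a focused left sequent. -/
theorem side {i : ℕ} {A : Ty i} (hA : posb A = false) {F : BConfig → BConfig} {d : ℕ} {D : Ty d}
    (hF : RDec A F d D) :
    AtMostOne (F (bvec A)) false ∧ Ok true (F (bvec A)) false d D := by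
  obtain ⟨h1, h2, h3, h4⟩ := rdec_facts _ F d D hF
  refine ⟨amo_of1 ?_, ok_of' ?_ h4⟩
  · rw [h2 _ (srt_bvec _)]; simp [ms_bvec, wbox]
  · rw [h3 _ (srt_bvec _)]; simp [ms_bvec, wcpx, hA]

theorem main_all : ∀ {i : ℕ} (A : Ty i), Main A := by
  intro i A
  induction A using tyInd with
  | atom b n i =>
    cases b with
    | pos =>
      refine main_pos rfl (fun F d D h => h) ?_
      rintro X rfl
      exact DW.idP n i
    | neg =>
      refine main_neg rfl (fun X h => h) ?_
      rintro F d D ⟨rfl, h⟩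
      cases h
      exact DW.idQ n i
  | prod A B ihA ihB =>
    refine main_pos rfl (fun F d D h => h) (fun X hX => ?_)
    obtain ⟨-, b, c⟩ := dec_facts _ X hX
    obtain ⟨Y, Z, hY, hZ, rfl⟩ := hX
    exact DW.prodR (ihA.2.1 Y hY) (ihB.2.1 Z hZ) (amo_of _ b) (ok_of' c (by simp [posb]))
  | wprod k hk A B ihA ihB =>
    refine main_pos rfl (fun F d D h => h) (fun X hX => ?_)
    obtain ⟨-, b, c⟩ := dec_facts _ X hX
    obtain ⟨Y, Z, hY, hZ, rfl⟩ := hX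
    exact DW.wprodR k hk (ihA.2.1 Y hY) (ihB.2.1 Z hZ) (wr_spec Y k Z) (amo_of _ b)
      (ok_of' c (by simp [posb]))
  | unitI =>
    refine main_pos rfl (fun F d D h => h) ?_
    rintro X rfl
    exact DW.unitIR
  | unitJ =>
    refine main_pos rfl (fun F d D h => h) ?_
    rintro X rfl
    exact DW.unitJR
  | oplus A B ihA ihB =>
    refine main_pos rfl (fun F d D h => h) (fun X hX => ?_)
    obtain ⟨-, b, c⟩ := dec_facts _ X hX
    rcases hX with hX | hX
    · exact DW.oplusR1 (ihA.2.1 X hX) (amo_of _ b) (ok_of' c (by simp [posb]))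
    · exact DW.oplusR2 (ihB.2.1 X hX) (amo_of _ b) (ok_of' c (by simp [posb]))
  | slash C B ihC ihB =>
    refine main_neg rfl (fun X h => h) (fun F d D hF => ?_)
    obtain ⟨s1, s2⟩ := side rfl hF
    obtain ⟨Y, G, hY, hG, rfl⟩ := hF
    obtain ⟨Z, hZ⟩ := (rdec_facts _ G d D hG).1.sub
    exact DW.overL (ihB.2.1 Y hY) (hZ _ (srt_fvec C)) (ihC.2.2 G d D hG)
      (hZ _ (srt_app (srt_bvec _) (dec_facts _ Y hY).1)) s1 s2
  | under A C ihA ihC =>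
    refine main_neg rfl (fun X h => h) (fun F d D hF => ?_)
    obtain ⟨s1, s2⟩ := side rfl hF
    obtain ⟨Y, G, hY, hG, rfl⟩ := hF
    obtain ⟨Z, hZ⟩ := (rdec_facts _ G d D hG).1.sub
    exact DW.underL (ihA.2.1 Y hY) (hZ _ (srt_fvec C)) (ihC.2.2 G d D hG)
      (hZ _ (srt_app (dec_facts _ Y hY).1 (srt_bvec _))) s1 s2
  | circ k hk C B ihC ihB =>
    refine main_neg rfl (fun X h => h) (fun F d D hF => ?_)
    obtain ⟨s1, s2⟩ := side rfl hF
    obtain ⟨Y, G, hY, hG, rfl⟩ := hF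
    obtain ⟨Z, hZ⟩ := (rdec_facts _ G d D hG).1.sub
    exact DW.circL k hk (ihB.2.1 Y hY) (hZ _ (srt_fvec C)) (ihC.2.2 G d D hG)
      (wr_spec _ k Y) (hZ _ (srt_wr hk (srt_bvec _) (dec_facts _ Y hY).1)) s1 s2
  | infx k hk A C ihA ihC =>
    refine main_neg rfl (fun X h => h) (fun F d D hF => ?_)
    obtain ⟨s1, s2⟩ := side rfl hF
    obtain ⟨Y, G, hY, hG, rfl⟩ := hF
    obtain ⟨Z, hZ⟩ := (rdec_facts _ G d D hG).1.sub
    exact DW.infxL k hk (ihA.2.1 Y hY) (hZ _ (srt_fvec C)) (ihC.2.2 G d D hG)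
      (wr_spec Y k _) (hZ _ (srt_wr hk (dec_facts _ Y hY).1 (srt_bvec _))) s1 s2
  | amp A B ihA ihB =>
    refine main_neg rfl (fun X h => h) (fun F d D hF => ?_)
    obtain ⟨s1, s2⟩ := side rfl hF
    obtain ⟨Z, hZ⟩ := (rdec_facts _ F d D hF).1.sub
    rcases hF with hF | hF
    · exact DW.ampL1 (hZ _ (srt_fvec A)) (ihA.2.2 F d D hF) (hZ _ (srt_bvec _)) s1 s2
    · exact DW.ampL2 (hZ _ (srt_fvec B)) (ihB.2.2 F d D hF) (hZ _ (srt_bvec _)) s1 s2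

/-- Eta-expansion in the strongly focalised calculus DAFoc: for every type
`A`, the unfocused sequent `vec(A) ⊢ A` is derivable in DAFoc. -/
theorem eta_expansion_DAFoc :
    ∀ (i : ℕ) (A : Ty i), DAFoc (vec A) false i A := by
  exact fun i A => (main_all A).1

end DA
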